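/- Let v > 0 and q ∈ ℝ with q ≤ v, let W be a d×d real symmetric positive definite matrix and R a d×d real symmetric matrix with W − R positive semidefinite, and let t ≥ 0. Set ξ = v⁻¹(R − q·v⁻¹·W), A(t) = v⁻¹W + tI, and ρ(t) = A(t)^{−1/2} ξ A(t)^{−1/2}. Then tr(ρ(t)²·(3(v − q)·I − 2v·ρ(t))) ≥ 0. -/

import Mathlib

open Matrix
open scoped Classical

open scoped MatrixOrder in
/-- `A^(-1/2)`: the inverse of the unique positive semidefinite square root of `A`
(junk value `0` if `A` is not positive semidefinite). -/
noncomputable def invSqrt {d : ℕ} (A : Matrix (Fin d) (Fin d) ℝ) : Matrix (Fin d) (Fin d) ℝ :=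
  if h : A.PosSemidef then (CFC.sqrt A)⁻¹ else 0

open scoped MatrixOrder in
theorem invSqrt_spec {d : ℕ} (A : Matrix (Fin d) (Fin d) ℝ) (hA : A.PosDef) :
    (invSqrt A)ᴴ = invSqrt A ∧ invSqrt A * A * invSqrt A = 1 := by
  have h := hA.posSemidef
  have e : invSqrt A = (CFC.sqrt A)⁻¹ := by simp [invSqrt, h]
  have hB : CFC.sqrt A * CFC.sqrt A = A := CFC.sqrt_mul_sqrt_self A h.nonneg
  have hH : (CFC.sqrt A).IsHermitian := (Matrix.nonneg_iff_posSemidef.mp (CFC.sqrt_nonneg A)).1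
  rw [e]
  generalize CFC.sqrt A = B at *
  have hu : IsUnit B.det := by
    have := hA.det_pos
    rw [← hB, Matrix.det_mul] at this
    refine isUnit_iff_ne_zero.mpr ?_
    rintro h0
    simp [h0] at this
  refine ⟨hH.inv, ?_⟩
  rw [← hB, ← Matrix.mul_assoc, Matrix.nonsing_inv_mul _ hu, Matrix.one_mul,
    Matrix.mul_nonsing_inv _ hu]

/-- With `ξ = v⁻¹(R - q v⁻¹ W)`, `A(t) = v⁻¹ W + t I`, `ρ(t) = A(t)^(-1/2) ξ A(t)^(-1/2)`,
we have `tr(ρ(t)² (3(v - q) I - 2v ρ(t))) ≥ 0`. -/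
theorem trace_rho_sq_mul_nonneg {d : ℕ} (v q t : ℝ) (W R : Matrix (Fin d) (Fin d) ℝ)
    (hv : 0 < v) (hq : q ≤ v) (hW : W.PosDef) (hR : R.IsSymm)
    (hWR : (W - R).PosSemidef) (ht : 0 ≤ t) :
    let ρ : Matrix (Fin d) (Fin d) ℝ :=
      invSqrt (v⁻¹ • W + t • 1) * (v⁻¹ • (R - (q * v⁻¹) • W)) * invSqrt (v⁻¹ • W + t • 1)
    0 ≤ (ρ * ρ * ((3 * (v - q)) • (1 : Matrix (Fin d) (Fin d) ℝ) - (2 * v) • ρ)).trace := by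
  have hA : (v⁻¹ • W + t • (1 : Matrix (Fin d) (Fin d) ℝ)).PosDef :=
    (hW.smul (inv_pos.mpr hv)).add_posSemidef (Matrix.PosSemidef.one.smul ht)
  obtain ⟨hS, hSA⟩ := invSqrt_spec _ hA
  generalize invSqrt (v⁻¹ • W + t • 1) = S at *
  intro ρ
  have hvq : 0 ≤ v - q := sub_nonneg.mpr hq
  have hWH : Wᴴ = W := hW.1
  have hRH : Rᴴ = R := by simpa using hR.eq
  have hρ : ρᴴ = ρ := by
    simp only [ρ, conjTranspose_mul, hS, conjTranspose_smul, conjTranspose_sub, hWH, hRH,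
      star_trivial, Matrix.mul_assoc]
  have key : (3 * (v - q)) • (1 : Matrix (Fin d) (Fin d) ℝ) - (2 * v) • ρ
      = (v - q) • (1 : Matrix (Fin d) (Fin d) ℝ)
        + (2 : ℝ) • (Sᴴ * ((W - R) + ((v - q) * t) • (1 : Matrix (Fin d) (Fin d) ℝ)) * S) := by
    have e : (W - R) + ((v - q) * t) • (1 : Matrix (Fin d) (Fin d) ℝ)
        = (v - q) • (v⁻¹ • W + t • (1 : Matrix (Fin d) (Fin d) ℝ))
          - v • (v⁻¹ • (R - (q * v⁻¹) • W)) := by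
      ext i j
      simp only [Matrix.add_apply, Matrix.sub_apply, Matrix.smul_apply, smul_eq_mul]
      field_simp
      ring
    rw [e, hS, Matrix.mul_sub, Matrix.sub_mul, Matrix.mul_smul, Matrix.smul_mul, hSA,
      Matrix.mul_smul, Matrix.smul_mul]
    change _ = (v - q) • (1 : Matrix (Fin d) (Fin d) ℝ) + (2 : ℝ) • ((v - q) • 1 - v • ρ)
    module
  have hM : ((3 * (v - q)) • (1 : Matrix (Fin d) (Fin d) ℝ) - (2 * v) • ρ).PosSemidef := by
    rw [key]
    refine (Matrix.PosSemidef.one.smul hvq).add (Matrix.PosSemidef.smul ?_ zero_le_two)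
    exact (hWR.add (Matrix.PosSemidef.one.smul (mul_nonneg hvq ht))).conjTranspose_mul_mul_same S
  have h := (hM.mul_mul_conjTranspose_same ρ).trace_nonneg
  rwa [hρ, Matrix.trace_mul_comm, ← Matrix.mul_assoc] at h
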